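/- Let G be a finite connected simple graph on n ≥ 2 vertices, let x_0 be any vertex of G, and let (x_0, x_1, …, x_t) be a simple random walk on G. Then the expected distance covered in time t satisfies E[ d(x_0, x_t) ] < 1 + √t · √(1 + 5 log n). -/

import Mathlib

open scoped Classical

/-- One-step transition weight of the simple random walk on `G`:
`1/deg a` if `a ∼ b`, and `0` otherwise. -/
noncomputable def stepWt {V : Type} [Fintype V] (G : SimpleGraph V) (a b : V) : ℝ :=
  if G.Adj a b then ((G.degree a : ℝ))⁻¹ else 0

/-- Probability that the simple random walk on `G` of length `t`, started at `x0`,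
produces a trajectory satisfying the event `E`. -/
noncomputable def walkProb {V : Type} [Fintype V] (G : SimpleGraph V) (t : ℕ) (x0 : V)
    (E : (Fin (t + 1) → V) → Prop) : ℝ :=
  ∑ p : Fin (t + 1) → V,
    if p 0 = x0 ∧ E p then ∏ i : Fin t, stepWt G (p i.castSucc) (p i.succ) else 0

/-- Expectation of the functional `f` of the trajectory of the simple random walk on `G`
of length `t`, started at `x0`. -/
noncomputable def walkExp {V : Type} [Fintype V] (G : SimpleGraph V) (t : ℕ) (x0 : V)
    (f : (Fin (t + 1) → V) → ℝ) : ℝ :=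
  ∑ p : Fin (t + 1) → V,
    (if p 0 = x0 then ∏ i : Fin t, stepWt G (p i.castSucc) (p i.succ) else 0) * f p

/-!
Let `P` be the transition matrix; it is a self-adjoint contraction of `L²(deg)`. The Pell identity
`T_k² + (1 - X²) U_{k-1}² = 1` shows that the Chebyshev polynomials `T_k(P)` are contractions too.
Expanding `X ^ t = E[T_{S_t}]`, with `S` the simple random walk on `ℤ`, and using that `T_k(P) x y`
vanishes for `|k| < d(x, y)`, one gets the Varopoulos–Carne bound in the form
`P ^ t x y ≤ 2 √(deg y / deg x) exp (-l d(x, y)) (cosh l) ^ t` for every real `l`. Summing over `y`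
bounds the moment generating function, `E[exp (l d(x₀, x_t))] ≤ 2 n ^ (3/2) exp (t l² / 2)`, and
Jensen's inequality with the optimal `l` gives `E[d(x₀, x_t)] ≤ √(2 t log (2 n ^ (3/2)))`, which is
at most `√(5 t log n)`.
-/

open Polynomial in
theorem chebyshev_T_sq_add_one_sub_X_sq_mul_U_sq (R : Type*) [CommRing R] (n : ℤ) :
    Chebyshev.T R n ^ 2 + (1 - X ^ 2) * Chebyshev.U R (n - 1) ^ 2 = 1 := by
  induction n using Int.negInduction with
  | nat n =>
    induction n with
    | zero => simp
    | succ n ih =>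
      have hT := Chebyshev.T_eq_X_mul_T_sub_pol_U R ((n : ℤ) - 1)
      have hU := Chebyshev.U_eq_X_mul_U_add_T R ((n : ℤ) - 1)
      rw [show (n : ℤ) - 1 + 2 = n + 1 by ring, sub_add_cancel] at hT
      rw [sub_add_cancel] at hU
      rw [Nat.cast_succ, add_sub_cancel_right, hT, hU]
      linear_combination ih
  | neg ih n => rw [Chebyshev.T_neg, Chebyshev.U_neg_sub_one, neg_sq, ih]

section BilinForm

open Polynomial

section CommRing

variable {R M : Type*} [CommRing R] [AddCommGroup M] [Module R M] {B : LinearMap.BilinForm R M}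
  {S : Module.End R M}

theorem isSelfAdjoint_aeval (hS : LinearMap.IsSelfAdjoint B S) (p : R[X]) :
    LinearMap.IsSelfAdjoint B (aeval S p) := by
  induction p using Polynomial.induction_on with
  | C a =>
    rw [aeval_C, Algebra.algebraMap_eq_smul_one]
    exact LinearMap.isAdjointPair_one.smul a
  | add p q hp hq => rw [map_add]; exact hp.add hq
  | monomial n a ih =>
    have hcomm : S * aeval S (C a * X ^ n) = aeval S (C a * X ^ n) * S := by
      have h := congrArg (aeval S) (X_mul (p := C a * X ^ n))
      rwa [map_mul, map_mul _ _ X, aeval_X] at h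
    have hmul := ih.mul hS
    rw [hcomm] at hmul
    rwa [pow_succ, ← mul_assoc, map_mul, aeval_X]

theorem apply_aeval_self_le_of_sq_add_one_sub_X_sq_mul_sq [LinearOrder R] [IsStrictOrderedRing R]
    (hS : LinearMap.IsSelfAdjoint B S) (hc : ∀ f, B (S f) (S f) ≤ B f f) {p q : R[X]}
    (hpq : p ^ 2 + (1 - X ^ 2) * q ^ 2 = 1) (f : M) :
    B (aeval S p f) (aeval S p f) ≤ B f f := by
  set P := aeval S p
  set Q := aeval S q
  have hP : LinearMap.IsSelfAdjoint B P := isSelfAdjoint_aeval hS p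
  have hQ : LinearMap.IsSelfAdjoint B Q := isSelfAdjoint_aeval hS q
  have hf : P (P f) + (Q (Q f) - Q (S (S (Q f)))) = f := by
    have h : p * p + (q * q - q * (X * (X * q))) = 1 := by linear_combination hpq
    replace h := congrArg (aeval S) h
    simp only [map_add, map_sub, map_mul, map_one, aeval_X] at h
    exact LinearMap.congr_fun h f
  have hsplit : B (P f) (P f) + (B (Q f) (Q f) - B (S (Q f)) (S (Q f))) = B f f := by
    rw [hP f, hQ f, hS (Q f), hQ f, ← map_sub, ← map_add, hf]
  linarith [hc (Q f)]

end CommRing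

variable {M : Type*} [AddCommGroup M] [Module ℝ M] {B : LinearMap.BilinForm ℝ M}
  {S : Module.End ℝ M}

theorem abs_apply_aeval_chebyshev_T_le (hB : B.IsPosSemidef) (hS : LinearMap.IsSelfAdjoint B S)
    (hc : ∀ f, B (S f) (S f) ≤ B f f) (k : ℤ) (f g : M) :
    |B f (aeval S (Chebyshev.T ℝ k) g)| ≤ √(B f f * B g g) := by
  refine Real.abs_le_sqrt ((B.apply_sq_le_of_symm hB.isNonneg.nonneg ⟨hB.isSymm.eq⟩ _ _).trans ?_)
  exact mul_le_mul_of_nonneg_left (apply_aeval_self_le_of_sq_add_one_sub_X_sq_mul_sq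
    hS hc (chebyshev_T_sq_add_one_sub_X_sq_mul_U_sq ℝ k) g)
    (hB.isNonneg.nonneg f)

theorem apply_aeval_eq_zero_of_natDegree_lt {f g : M} {d : ℕ} (h : ∀ j < d, B f ((S ^ j) g) = 0)
    {p : ℝ[X]} (hp : p.natDegree < d) : B f (aeval S p g) = 0 := by
  rw [aeval_eq_sum_range, LinearMap.sum_apply, map_sum]
  refine Finset.sum_eq_zero fun j hj ↦ ?_
  rw [LinearMap.smul_apply, map_smul, h j (by rw [Finset.mem_range] at hj; omega), smul_zero]

theorem one_le_two_mul_exp_neg_mul_cosh {d k : ℝ} (hdk : |d| ≤ |k|) (l : ℝ) :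
    1 ≤ 2 * Real.exp (-(l * d)) * Real.cosh (l * k) := by
  have hcosh : Real.cosh (l * d) ≤ Real.cosh (l * k) := by
    rw [Real.cosh_le_cosh, abs_mul, abs_mul]
    gcongr
  calc 1 = Real.exp (-(l * d)) * Real.exp (l * d) := by
        rw [← Real.exp_add, neg_add_cancel, Real.exp_zero]
    _ ≤ Real.exp (-(l * d)) * (2 * Real.cosh (l * d)) := by
        gcongr
        rw [Real.cosh_eq]
        linarith [Real.exp_pos (-(l * d))]
    _ ≤ Real.exp (-(l * d)) * (2 * Real.cosh (l * k)) := by gcongr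
    _ = _ := by ring

/- `a t k` is the average of `a 0` over the simple random walk on `ℤ` at time `t` from `k`, and
`cosh (l * ·)` is an eigenfunction of that walk with eigenvalue `cosh l`. -/
theorem abs_le_mul_cosh_pow_mul_cosh {a : ℕ → ℤ → ℝ} {C l : ℝ}
    (h_zero : ∀ k, |a 0 k| ≤ C * Real.cosh (l * k))
    (h_succ : ∀ t k, 2 * a (t + 1) k = a t (k + 1) + a t (k - 1)) (t : ℕ) (k : ℤ) :
    |a t k| ≤ C * Real.cosh l ^ t * Real.cosh (l * k) := by
  induction t generalizing k with
  | zero => simpa using h_zero k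
  | succ t ih =>
    have hcosh : Real.cosh (l * (k + 1 : ℤ)) + Real.cosh (l * (k - 1 : ℤ)) =
        2 * Real.cosh l * Real.cosh (l * k) := by
      push_cast
      rw [mul_add, mul_sub, mul_one, Real.cosh_add, Real.cosh_sub]
      ring
    have hle : 2 * |a (t + 1) k| ≤ 2 * (C * Real.cosh l ^ (t + 1) * Real.cosh (l * k)) :=
      calc 2 * |a (t + 1) k| = |a t (k + 1) + a t (k - 1)| := by
            rw [← h_succ, abs_mul, abs_two]
        _ ≤ |a t (k + 1)| + |a t (k - 1)| := abs_add_le _ _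
        _ ≤ C * Real.cosh l ^ t *
            (Real.cosh (l * (k + 1 : ℤ)) + Real.cosh (l * (k - 1 : ℤ))) := by
            rw [mul_add]
            exact add_le_add (ih _) (ih _)
        _ = 2 * (C * Real.cosh l ^ (t + 1) * Real.cosh (l * k)) := by rw [hcosh]; ring
    linarith

theorem abs_apply_pow_le_exp_mul_cosh_pow (hB : B.IsPosSemidef) (hS : LinearMap.IsSelfAdjoint B S)
    (hc : ∀ f, B (S f) (S f) ≤ B f f) {f g : M} {d : ℕ} (h : ∀ j < d, B f ((S ^ j) g) = 0)
    (l : ℝ) (t : ℕ) :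
    |B f ((S ^ t) g)| ≤
      2 * Real.exp (-(l * d)) * √(B f f * B g g) * Real.cosh l ^ t := by
  have h_zero (k : ℤ) : |B f (aeval S (X ^ 0 * Chebyshev.T ℝ k) g)| ≤
      2 * Real.exp (-(l * d)) * √(B f f * B g g) * Real.cosh (l * k) := by
    rw [pow_zero, one_mul]
    rcases lt_or_ge k.natAbs d with hk | hk
    · rw [apply_aeval_eq_zero_of_natDegree_lt h (by rwa [Chebyshev.natDegree_T]), abs_zero]
      positivity
    · have hdk : |(d : ℝ)| ≤ |(k : ℝ)| := by
        rw [Nat.abs_cast, ← Int.cast_abs, Int.abs_eq_natAbs]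
        exact_mod_cast hk
      calc _ ≤ 1 * √(B f f * B g g) := by
            rw [one_mul]; exact abs_apply_aeval_chebyshev_T_le hB hS hc k f g
        _ ≤ 2 * Real.exp (-(l * d)) * Real.cosh (l * k) * √(B f f * B g g) := by
            gcongr; exact one_le_two_mul_exp_neg_mul_cosh hdk l
        _ = _ := by ring
  have h_succ (t : ℕ) (k : ℤ) : 2 * B f (aeval S (X ^ (t + 1) * Chebyshev.T ℝ k) g) =
      B f (aeval S (X ^ t * Chebyshev.T ℝ (k + 1)) g) +
        B f (aeval S (X ^ t * Chebyshev.T ℝ (k - 1)) g) := by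
    have hpoly : (2 : ℝ) • (X ^ (t + 1) * Chebyshev.T ℝ k) =
        X ^ t * Chebyshev.T ℝ (k + 1) + X ^ t * Chebyshev.T ℝ (k - 1) := by
      rw [Chebyshev.T_add_one, two_smul]
      ring
    rw [← map_add, ← LinearMap.add_apply, ← map_add, ← hpoly, map_smul, LinearMap.smul_apply,
      map_smul, smul_eq_mul]
  simpa using abs_le_mul_cosh_pow_mul_cosh
    (a := fun t k ↦ B f (aeval S (X ^ t * Chebyshev.T ℝ k) g)) h_zero h_succ t 0

end BilinForm

theorem sum_mul_le_sqrt_of_sum_mul_exp_le {ι : Type*} [Fintype ι] {w f : ι → ℝ} {A v : ℝ}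
    (hw : ∀ i, 0 ≤ w i) (hw_sum : ∑ i, w i = 1)
    (h : ∀ l, ∑ i, w i * Real.exp (l * f i) ≤ A * Real.exp (v * l ^ 2 / 2)) :
    ∑ i, w i * f i ≤ √(2 * v * Real.log A) := by
  have hjensen (l : ℝ) : Real.exp (l * ∑ i, w i * f i) ≤ A * Real.exp (v * l ^ 2 / 2) := by
    refine le_trans ?_ (h l)
    have := convexOn_exp.map_sum_le (fun i _ ↦ hw i) hw_sum (p := fun i ↦ l * f i)
      (fun i _ ↦ Set.mem_univ _)
    simpa only [smul_eq_mul, Finset.mul_sum, mul_left_comm] using this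
  have hA : 0 < A := pos_of_mul_pos_left ((Real.exp_pos _).trans_le (hjensen 0)) (Real.exp_pos _).le
  -- Optimising over `l` amounts to the discriminant of this quadratic being nonpositive.
  have hquad (l : ℝ) : 0 ≤ v / 2 * (l * l) + -(∑ i, w i * f i) * l + Real.log A := by
    have hlog := Real.log_le_log (Real.exp_pos _) (hjensen l)
    rw [Real.log_exp, Real.log_mul hA.ne' (Real.exp_pos _).ne', Real.log_exp] at hlog
    linarith
  have hdiscrim := discrim_le_zero hquad
  rw [discrim] at hdiscrim
  exact Real.le_sqrt_of_sq_le (by linarith)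

section ReversibleChain

variable {V : Type*} [Fintype V] [DecidableEq V] {π : V → ℝ} {P : Matrix V V ℝ}

/-- Detailed balance: the chain with transition matrix `P` is reversible with respect to the weight
`π`, which is not required to have total mass one. -/
def IsReversible (P : Matrix V V ℝ) (π : V → ℝ) : Prop :=
  ∀ x y, π x * P x y = π y * P y x

/-- The semi-inner product of `L²(V, π)`, for which the transition matrix of a `π`-reversible chain
is self-adjoint. It is a bilinear form rather than an `InnerProductSpace` so that `V → ℝ` keeps its
usual instances. -/
noncomputable def weightedForm (π : V → ℝ) : LinearMap.BilinForm ℝ (V → ℝ) :=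
  Matrix.toLinearMap₂' ℝ (Matrix.diagonal π)

theorem weightedForm_apply (f g : V → ℝ) : weightedForm π f g = ∑ x, π x * (f x * g x) := by
  rw [weightedForm, Matrix.toLinearMap₂'_apply', dotProduct]
  refine Finset.sum_congr rfl fun x _ ↦ ?_
  rw [Matrix.mulVec_diagonal]
  ring

theorem isPosSemidef_weightedForm (hπ : ∀ x, 0 ≤ π x) : (weightedForm π).IsPosSemidef where
  eq f g := by simp only [weightedForm_apply, mul_comm (f _)]
  nonneg f := by
    rw [weightedForm_apply]
    exact Finset.sum_nonneg fun x _ ↦ mul_nonneg (hπ x) (mul_self_nonneg (f x))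

theorem IsReversible.isSelfAdjoint_toLin' (h : IsReversible P π) :
    LinearMap.IsSelfAdjoint (weightedForm π) (Matrix.toLin' P) := by
  refine (isAdjointPair_toLinearMap₂' (J := Matrix.diagonal π) (J' := Matrix.diagonal π)
    (A := P) (A' := P)).mpr (Matrix.ext fun x y ↦ ?_)
  rw [Matrix.mul_diagonal, Matrix.diagonal_mul, Matrix.transpose_apply, mul_comm, h y x]

theorem sq_mulVec_apply_le (hP : P ∈ Matrix.rowStochastic ℝ V) (f : V → ℝ) (x : V) :
    P.mulVec f x ^ 2 ≤ ∑ y, P x y * f y ^ 2 := by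
  have hPxy (y : V) : 0 ≤ P x y := Matrix.nonneg_of_mem_rowStochastic hP
  have h := Finset.sum_sq_le_sum_mul_sum_of_sq_le_mul Finset.univ (r := fun y ↦ P x y * f y)
    (f := P x) (g := fun y ↦ P x y * f y ^ 2) (fun y _ ↦ hPxy y)
    (fun y _ ↦ mul_nonneg (hPxy y) (sq_nonneg _)) (fun y _ ↦ by apply le_of_eq; ring)
  rwa [Matrix.sum_row_of_mem_rowStochastic hP, one_mul] at h

theorem weightedForm_mulVec_self_le (hP : P ∈ Matrix.rowStochastic ℝ V) (hπ : ∀ x, 0 ≤ π x)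
    (h : IsReversible P π) (f : V → ℝ) :
    weightedForm π (P.mulVec f) (P.mulVec f) ≤ weightedForm π f f := by
  simp only [weightedForm_apply, ← sq]
  calc ∑ x, π x * P.mulVec f x ^ 2 ≤ ∑ x, π x * ∑ y, P x y * f y ^ 2 := by
        gcongr with x
        · exact hπ x
        · exact sq_mulVec_apply_le hP f x
    _ = ∑ y, π y * (∑ x, P y x) * f y ^ 2 := by
        simp only [Finset.mul_sum, Finset.sum_mul]
        rw [Finset.sum_comm]
        exact Finset.sum_congr rfl fun y _ ↦ Finset.sum_congr rfl fun x _ ↦ by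
          rw [← mul_assoc, h x y]
    _ = ∑ y, π y * f y ^ 2 := by simp only [Matrix.sum_row_of_mem_rowStochastic hP, mul_one]

theorem weightedForm_single_left (f : V → ℝ) (x : V) :
    weightedForm π (Pi.single x 1) f = π x * f x := by
  rw [weightedForm_apply, Finset.sum_eq_single x]
  · rw [Pi.single_eq_same, one_mul]
  · intro y _ hy
    rw [Pi.single_eq_of_ne hy, zero_mul, mul_zero]
  · exact fun hx ↦ absurd (Finset.mem_univ x) hx

theorem pow_apply_mul_exp_le_sqrt_mul_cosh_pow (hP : P ∈ Matrix.rowStochastic ℝ V)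
    (hπ : ∀ x, 0 ≤ π x) (h : IsReversible P π) {x y : V} (hx : 0 < π x) {d : ℕ}
    (hd : ∀ j < d, (P ^ j) x y = 0) (l : ℝ) (t : ℕ) :
    (P ^ t) x y * Real.exp (l * d) ≤ 2 * √(π y / π x) * Real.cosh l ^ t := by
  have hentry (j : ℕ) : weightedForm π (Pi.single x 1) ((Matrix.toLin' P ^ j) (Pi.single y 1)) =
      π x * (P ^ j) x y := by
    rw [weightedForm_single_left, ← Matrix.toLin'_pow, Matrix.toLin'_apply,
      Matrix.mulVec_single_one, Matrix.col_apply]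
  have hcarne := abs_apply_pow_le_exp_mul_cosh_pow (isPosSemidef_weightedForm hπ)
    h.isSelfAdjoint_toLin' (weightedForm_mulVec_self_le hP hπ h) (f := Pi.single x 1)
    (g := Pi.single y 1) (d := d) (fun j hj ↦ by rw [hentry, hd j hj, mul_zero]) l t
  rw [hentry, weightedForm_single_left, weightedForm_single_left, Pi.single_eq_same,
    Pi.single_eq_same, mul_one, mul_one] at hcarne
  have hsqrt : √(π x * π y) = π x * √(π y / π x) := by
    rw [← Real.sqrt_sq hx.le, ← Real.sqrt_mul (sq_nonneg _), Real.sqrt_sq hx.le]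
    congr 1
    field_simp
  refine le_of_mul_le_mul_left ?_ hx
  calc π x * ((P ^ t) x y * Real.exp (l * d)) = π x * (P ^ t) x y * Real.exp (l * d) := by ring
    _ ≤ 2 * Real.exp (-(l * d)) * √(π x * π y) * Real.cosh l ^ t * Real.exp (l * d) := by
        exact mul_le_mul_of_nonneg_right ((le_abs_self _).trans hcarne) (Real.exp_pos _).le
    _ = π x * (2 * √(π y / π x) * Real.cosh l ^ t) *
        (Real.exp (-(l * d)) * Real.exp (l * d)) := by rw [hsqrt]; ring
    _ = π x * (2 * √(π y / π x) * Real.cosh l ^ t) := by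
        rw [← Real.exp_add, neg_add_cancel, Real.exp_zero, mul_one]

theorem sum_pow_apply_mul_exp_le (hP : P ∈ Matrix.rowStochastic ℝ V) (hπ : ∀ x, 0 ≤ π x)
    (h : IsReversible P π) {x : V} (hx : 0 < π x) {d : V → ℕ}
    (hd : ∀ y, ∀ j < d y, (P ^ j) x y = 0) (t : ℕ) (l : ℝ) :
    ∑ y, (P ^ t) x y * Real.exp (l * d y) ≤
      2 * (∑ y, √(π y / π x)) * Real.exp (t * l ^ 2 / 2) := by
  have hcosh : Real.cosh l ^ t ≤ Real.exp (t * l ^ 2 / 2) := by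
    rw [mul_div_assoc, Real.exp_nat_mul]
    exact pow_le_pow_left₀ (Real.cosh_pos l).le (Real.cosh_le_exp_half_sq l) t
  rw [Finset.mul_sum, Finset.sum_mul]
  exact Finset.sum_le_sum fun y _ ↦
    (pow_apply_mul_exp_le_sqrt_mul_cosh_pow hP hπ h hx (hd y) l t).trans
      (mul_le_mul_of_nonneg_left hcosh (by positivity))

theorem sum_pow_apply_mul_le_sqrt (hP : P ∈ Matrix.rowStochastic ℝ V) (hπ : ∀ x, 0 ≤ π x)
    (h : IsReversible P π) {x : V} (hx : 0 < π x) {d : V → ℕ}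
    (hd : ∀ y, ∀ j < d y, (P ^ j) x y = 0) (t : ℕ) :
    ∑ y, (P ^ t) x y * d y ≤ √(2 * t * Real.log (2 * ∑ y, √(π y / π x))) :=
  have hPt : P ^ t ∈ Matrix.rowStochastic ℝ V := pow_mem hP t
  sum_mul_le_sqrt_of_sum_mul_exp_le (fun _ ↦ Matrix.nonneg_of_mem_rowStochastic hPt)
    (Matrix.sum_row_of_mem_rowStochastic hPt x) (sum_pow_apply_mul_exp_le hP hπ h hx hd t)

end ReversibleChain

section SimpleRandomWalk

theorem pow_apply_eq_zero_of_lt_dist {V R : Type*} [Fintype V] [DecidableEq V] [Semiring R]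
    {G : SimpleGraph V} {A : Matrix V V R} (hA : ∀ x y, ¬ G.Adj x y → A x y = 0) {x y : V} {j : ℕ}
    (hj : j < G.dist x y) : (A ^ j) x y = 0 := by
  have hwalk {x y : V} (h : (A ^ j) x y ≠ 0) : ∃ p : G.Walk x y, p.length = j := by
    clear hj
    induction j generalizing x with
    | zero =>
      obtain rfl : x = y := by
        by_contra hxy
        exact h (by rw [pow_zero, Matrix.one_apply_ne hxy])
      exact ⟨.nil, rfl⟩
    | succ j ih =>
      rw [pow_succ', Matrix.mul_apply] at h
      obtain ⟨z, -, hz⟩ := Finset.exists_ne_zero_of_sum_ne_zero h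
      obtain ⟨p, hp⟩ := ih (right_ne_zero_of_mul hz)
      have hxz : G.Adj x z := not_imp_comm.mp (hA x z) (left_ne_zero_of_mul hz)
      exact ⟨.cons hxz p, by rw [SimpleGraph.Walk.length_cons, hp]⟩
  by_contra h
  obtain ⟨p, rfl⟩ := hwalk h
  exact hj.not_ge (SimpleGraph.dist_le p)

variable {V : Type} [Fintype V] {G : SimpleGraph V}

/-- The transition matrix of the simple random walk on `G`. The row of an isolated vertex is
zero. -/
noncomputable def transitionMatrix (G : SimpleGraph V) : Matrix V V ℝ :=
  Matrix.of (stepWt G)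

theorem sum_stepWt {x : V} (hx : 0 < G.degree x) : ∑ y, stepWt G x y = 1 := by
  simp only [stepWt]
  rw [← Finset.sum_filter, Finset.sum_const, ← G.neighborFinset_eq_filter,
    G.card_neighborFinset_eq_degree, nsmul_eq_mul, mul_inv_cancel₀ (by positivity)]

theorem transitionMatrix_mem_rowStochastic (hG : ∀ v, 0 < G.degree v) :
    transitionMatrix G ∈ Matrix.rowStochastic ℝ V := by
  refine Matrix.mem_rowStochastic_iff_sum.mpr ⟨fun x y ↦ ?_, fun x ↦ sum_stepWt (hG x)⟩
  rw [transitionMatrix, Matrix.of_apply, stepWt]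
  positivity

theorem isReversible_transitionMatrix (G : SimpleGraph V) :
    IsReversible (transitionMatrix G) fun v ↦ (G.degree v : ℝ) := by
  intro x y
  simp only [transitionMatrix, Matrix.of_apply, stepWt, G.adj_comm y x]
  split_ifs with h
  · rw [mul_inv_cancel₀ (Nat.cast_ne_zero.mpr h.degree_pos_left.ne'),
      mul_inv_cancel₀ (Nat.cast_ne_zero.mpr h.degree_pos_right.ne')]
  · rw [mul_zero, mul_zero]

theorem walkExp_zero (x : V) (f : (Fin 1 → V) → ℝ) : walkExp G 0 x f = f fun _ ↦ x := by
  rw [walkExp, Finset.sum_eq_single fun _ ↦ x]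
  · simp
  · intro p _ hp
    have hp0 : p 0 ≠ x := fun h ↦ hp (funext fun i ↦ by rw [Subsingleton.elim (α := Fin 1) i 0, h])
    rw [if_neg hp0, zero_mul]
  · simp

theorem walkExp_succ (t : ℕ) (x : V) (f : (Fin (t + 2) → V) → ℝ) :
    walkExp G (t + 1) x f = ∑ y, stepWt G x y * walkExp G t y fun p ↦ f (Fin.cons x p) := by
  have hcons (z : V) (p : Fin (t + 1) → V) :
      ∏ i : Fin (t + 1), stepWt G ((Fin.cons z p : Fin (t + 2) → V) i.castSucc)
        ((Fin.cons z p : Fin (t + 2) → V) i.succ) =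
      stepWt G z (p 0) * ∏ i : Fin t, stepWt G (p i.castSucc) (p i.succ) := by
    rw [Fin.prod_univ_succ]
    rfl
  calc walkExp G (t + 1) x f
      = ∑ z, ∑ p : Fin (t + 1) → V, (if z = x then
          stepWt G z (p 0) * ∏ i : Fin t, stepWt G (p i.castSucc) (p i.succ) else 0) *
          f (Fin.cons z p) := by
        rw [walkExp, ← (Fin.consEquiv fun _ ↦ V).sum_comp, Fintype.sum_prod_type]
        simp only [Fin.consEquiv_apply, Fin.cons_zero, hcons]
        rfl
    _ = ∑ p : Fin (t + 1) → V, stepWt G x (p 0) *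
          (∏ i : Fin t, stepWt G (p i.castSucc) (p i.succ)) * f (Fin.cons x p) := by
        rw [Finset.sum_comm]
        simp only [ite_mul, zero_mul, Finset.sum_ite_eq', Finset.mem_univ, if_true]
    _ = ∑ y, stepWt G x y * walkExp G t y fun p ↦ f (Fin.cons x p) := by
        simp only [walkExp, Finset.mul_sum]
        rw [Finset.sum_comm]
        simp only [ite_mul, zero_mul, mul_ite, mul_zero, Finset.sum_ite_eq, Finset.mem_univ,
          if_true, mul_assoc]

theorem walkExp_comp_last (t : ℕ) (x : V) (g : V → ℝ) :
    walkExp G t x (fun p ↦ g (p (Fin.last t))) = ∑ y, (transitionMatrix G ^ t) x y * g y := by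
  induction t generalizing x with
  | zero =>
    rw [walkExp_zero]
    simp [Matrix.one_apply]
  | succ t ih =>
    rw [walkExp_succ]
    simp only [← Fin.succ_last, Fin.cons_succ, ih, pow_succ', Matrix.mul_apply, Finset.mul_sum,
      Finset.sum_mul, mul_assoc]
    exact Finset.sum_comm

theorem sum_sqrt_degree_div_degree_le {x : V} (hx : 0 < G.degree x) :
    ∑ y, √((G.degree y : ℝ) / G.degree x) ≤ Fintype.card V * √(Fintype.card V) := by
  rw [← nsmul_eq_mul]
  refine Finset.sum_le_card_nsmul _ _ _ fun y _ ↦ Real.sqrt_le_sqrt ?_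
  calc (G.degree y : ℝ) / G.degree x ≤ G.degree y :=
        div_le_self (Nat.cast_nonneg _) (by exact_mod_cast hx)
    _ ≤ Fintype.card V := by exact_mod_cast (G.degree_lt_card_verts y).le

theorem two_mul_log_two_mul_sum_sqrt_degree_div_degree_le (hG : ∀ v, 0 < G.degree v) (x : V) :
    2 * Real.log (2 * ∑ y, √((G.degree y : ℝ) / G.degree x)) ≤
      5 * Real.log (Fintype.card V) := by
  set n := Fintype.card V
  set A := ∑ y, √((G.degree y : ℝ) / G.degree x)
  have hn : (2 : ℝ) ≤ n := by exact_mod_cast lt_of_le_of_lt (hG x) (G.degree_lt_card_verts x)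
  have hdeg (y : V) : (0 : ℝ) < G.degree y := Nat.cast_pos.mpr (hG y)
  have hA : 0 < A :=
    Finset.sum_pos (fun y _ ↦ Real.sqrt_pos.mpr (div_pos (hdeg y) (hdeg x))) ⟨x, Finset.mem_univ x⟩
  have hle : (2 * A) ^ 2 ≤ (n : ℝ) ^ 5 :=
    calc (2 * A) ^ 2 ≤ (2 * (n * √n)) ^ 2 := by
          gcongr
          exact sum_sqrt_degree_div_degree_le (hG x)
      _ = 2 ^ 2 * (n : ℝ) ^ 3 := by
          rw [mul_pow, mul_pow, Real.sq_sqrt (Nat.cast_nonneg n)]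
          ring
      _ ≤ (n : ℝ) ^ 2 * (n : ℝ) ^ 3 := by gcongr
      _ = (n : ℝ) ^ 5 := by ring
  simpa only [Real.log_pow, Nat.cast_ofNat] using Real.log_le_log (by positivity) hle

theorem sum_transitionMatrix_pow_apply_mul_dist_le (hG : ∀ v, 0 < G.degree v) (x : V) (t : ℕ) :
    ∑ y, (transitionMatrix G ^ t) x y * G.dist x y ≤
      √(2 * t * Real.log (2 * ∑ y, √((G.degree y : ℝ) / G.degree x))) :=
  sum_pow_apply_mul_le_sqrt (transitionMatrix_mem_rowStochastic hG) (fun _ ↦ Nat.cast_nonneg _)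
    (isReversible_transitionMatrix G) (Nat.cast_pos.mpr (hG x))
    (fun _ _ hj ↦ pow_apply_eq_zero_of_lt_dist (fun _ _ hab ↦ if_neg hab) hj) t

theorem expected_distance_bound_general (hG : ∀ v, 0 < G.degree v) (x : V) (t : ℕ) :
    walkExp G t x (fun p ↦ (G.dist x (p (Fin.last t)) : ℝ)) ≤
      √t * √(5 * Real.log (Fintype.card V)) :=
  calc walkExp G t x (fun p ↦ (G.dist x (p (Fin.last t)) : ℝ))
      = ∑ y, (transitionMatrix G ^ t) x y * G.dist x y :=
        walkExp_comp_last t x fun y ↦ (G.dist x y : ℝ)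
    _ ≤ √(2 * t * Real.log (2 * ∑ y, √((G.degree y : ℝ) / G.degree x))) :=
        sum_transitionMatrix_pow_apply_mul_dist_le hG x t
    _ = √t * √(2 * Real.log (2 * ∑ y, √((G.degree y : ℝ) / G.degree x))) := by
        rw [mul_assoc, mul_left_comm, Real.sqrt_mul (Nat.cast_nonneg t)]
    _ ≤ √t * √(5 * Real.log (Fintype.card V)) := by
        gcongr √t * √?_
        exact two_mul_log_two_mul_sum_sqrt_degree_div_degree_le hG x

end SimpleRandomWalk

/-- **Key Lemma.** The expected distance covered in time `t` by a simple random walk on a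
connected simple graph on `n ≥ 2` vertices is less than `1 + √t·√(1 + 5 log n)`. -/
theorem expected_distance_bound {V : Type} [Fintype V] (G : SimpleGraph V) (n : ℕ) (hn : 2 ≤ n)
    (hcard : Fintype.card V = n) (hconn : G.Connected) (x0 : V) (t : ℕ) :
    walkExp G t x0 (fun p => (G.dist x0 (p (Fin.last t)) : ℝ))
      < 1 + Real.sqrt t * Real.sqrt (1 + 5 * Real.log n) := by
  have : Nontrivial V := Fintype.one_lt_card_iff_nontrivial.mp (hcard ▸ hn)
  calc walkExp G t x0 (fun p => (G.dist x0 (p (Fin.last t)) : ℝ))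
      ≤ √t * √(5 * Real.log n) := hcard ▸
        expected_distance_bound_general (fun v ↦ hconn.preconnected.degree_pos_of_nontrivial v) x0 t
    _ ≤ √t * √(1 + 5 * Real.log n) := by gcongr; linarith
    _ < 1 + √t * √(1 + 5 * Real.log n) := lt_one_add _
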